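/- arXiv:1511.04309 — 4 statements merged into one kernel-verified Lean document; each statement's English description precedes it below -/
import Mathlib

section
/- (Theorem 1 of the paper.) There exists no unitary U ∈ SU(4) acting on two qubits that achieves perfect quantum-phase synchronization for all initial pure product states. Precisely: for every U ∈ SU(4) there exists a pure product state ρ = |ψ₁⟩⟨ψ₁| ⊗ |ψ₂⟩⟨ψ₂| for which the phase synchronization fidelity F(ρ, U) is defined (both final reduced Bloch vectors have nonzero projection into the xy-plane) and F(ρ, U) ≠ 1. -/
/-!
Write `w = U v` for the image of a product vector `v`, and let `c₁(w)`, `c₂(w)` be the coherences of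
its two reduced states, i.e. half their `xy`-Bloch vectors, read as complex numbers. Perfect
synchronization says that `c₁(w) * conj (c₂(w))` is always a nonnegative real
(`nonneg_of_phaseFid`).

Denote by `x⊥` the antipode of a qubit vector `x`. On `w = a (x ⊗ y) + b (x⊥ ⊗ y⊥)` the two
coherences are `|a|² - |b|²` times those of `x` and `y`, up to positive factors. So if the
`xy`-Bloch vectors of `x` and `y` are not positively parallel, then every such `w` that comes from a
product vector has `|a| = |b|`. Being a product vector is the vanishing of the determinant `qf`, a
quadratic form; with `p a² + m a b + n b² = qf (Uᴴ w)` we conclude `p ≠ 0`, `|n| = |p|` and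
`|m| ≤ 2 |p|` (`bounds_of_generic`), and the last two relations extend to all `x`, `y` by continuity
(`bounds_all`).

Now let `x` not be a pole. The quadratic form `y ↦ qf (Uᴴ (x ⊗ y))` has a zero `y`. There `p = 0`,
so `m = n = 0`, and `Uᴴ` maps the span of `x ⊗ y`, `x⊥ ⊗ y⊥` to product vectors. The orthogonal
complement of a two-dimensional space of product vectors is again one (`qf_orthogonal`), so `y⊥` is
a zero as well. Since `p` vanishes at both `(x, y)` and `(x, y⊥)`, and the `xy`-Bloch vector of `x`
is nonzero, those of `y` and `y⊥` are each zero or positively parallel to it; being opposite to each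
other, they are zero, so `y` is a pole. Hence `qf (Uᴴ (x ⊗ e₀)) = 0` for all nonpolar `x`
(`qf_pole`), and `m = 0` at `(x, e₀)`. Comparing coefficients in `x` shows that `Uᴴ (e₀ ⊗ e₀)` lies in the radical of the nondegenerate
form `bf`, a contradiction.
-/


open Matrix Complex Real Kronecker
open scoped ComplexOrder

noncomputable section

/-- Pauli matrices -/
def pauliX : Matrix (Fin 2) (Fin 2) ℂ := !![0, 1; 1, 0]
def pauliY : Matrix (Fin 2) (Fin 2) ℂ := !![0, -Complex.I; Complex.I, 0]
def pauliZ : Matrix (Fin 2) (Fin 2) ℂ := !![1, 0; 0, -1]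

/-- partial trace over the second qubit -/
def ptrace2 (ρ : Matrix (Fin 2 × Fin 2) (Fin 2 × Fin 2) ℂ) : Matrix (Fin 2) (Fin 2) ℂ :=
  fun i j => ∑ k : Fin 2, ρ (i, k) (j, k)

/-- partial trace over the first qubit -/
def ptrace1 (ρ : Matrix (Fin 2 × Fin 2) (Fin 2 × Fin 2) ℂ) : Matrix (Fin 2) (Fin 2) ℂ :=
  fun i j => ∑ k : Fin 2, ρ (k, i) (k, j)

/-- Bloch vector of a single-qubit state -/
def bloch (τ : Matrix (Fin 2) (Fin 2) ℂ) : Fin 3 → ℝ :=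
  ![(Matrix.trace (pauliX * τ)).re, (Matrix.trace (pauliY * τ)).re,
    (Matrix.trace (pauliZ * τ)).re]

/-- projection of the Bloch vector into the xy-plane -/
def mvec (τ : Matrix (Fin 2) (Fin 2) ℂ) : Fin 2 → ℝ :=
  ![(Matrix.trace (pauliX * τ)).re, (Matrix.trace (pauliY * τ)).re]

def mdot (a b : Fin 2 → ℝ) : ℝ := a 0 * b 0 + a 1 * b 1
def mnorm (a : Fin 2 → ℝ) : ℝ := Real.sqrt (a 0 ^ 2 + a 1 ^ 2)

/-- quantum-phase fidelity between two single-qubit states -/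
def phaseFid (τ₁ τ₂ : Matrix (Fin 2) (Fin 2) ℂ) : ℝ :=
  mdot (mvec τ₁) (mvec τ₂) / (mnorm (mvec τ₁) * mnorm (mvec τ₂))

/-- phase synchronization fidelity of a two-qubit state ρ under a unitary U -/
def PSF (ρ U : Matrix (Fin 2 × Fin 2) (Fin 2 × Fin 2) ℂ) : ℝ :=
  phaseFid (ptrace2 (U * ρ * Uᴴ)) (ptrace1 (U * ρ * Uᴴ))

/-- pure qubit state |ψ(θ,φ)⟩ = cos(θ/2)|0⟩ + e^{iφ} sin(θ/2)|1⟩ -/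
def ψ (θ φ : ℝ) : Fin 2 → ℂ :=
  ![(Real.cos (θ / 2) : ℂ), Complex.exp (Complex.I * φ) * (Real.sin (θ / 2) : ℂ)]

/-- density matrix |v⟩⟨v| of a vector -/
def dm (v : Fin 2 → ℂ) : Matrix (Fin 2) (Fin 2) ℂ := Matrix.vecMulVec v (star v)

/-- CNOT with qubit 1 as control and qubit 2 as target -/
def CNOT12 : Matrix (Fin 2 × Fin 2) (Fin 2 × Fin 2) ℂ :=
  fun i j => if i.1 = j.1 ∧ i.2 = j.2 + j.1 then 1 else 0

/-- CNOT with qubit 2 as control and qubit 1 as target -/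
def CNOT21 : Matrix (Fin 2 × Fin 2) (Fin 2 × Fin 2) ℂ :=
  fun i j => if i.1 = j.1 + j.2 ∧ i.2 = j.2 then 1 else 0

/-- R_y(β) = exp(−i(β/2)σ_y) -/
def Ry (β : ℝ) : Matrix (Fin 2) (Fin 2) ℂ :=
  !![(Real.cos (β / 2) : ℂ), -(Real.sin (β / 2) : ℂ);
     (Real.sin (β / 2) : ℂ), (Real.cos (β / 2) : ℂ)]

/-- R_z(γ) = exp(−i(γ/2)σ_z) -/
def Rz (γ : ℝ) : Matrix (Fin 2) (Fin 2) ℂ :=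
  !![Complex.exp (-(Complex.I * γ / 2)), 0; 0, Complex.exp (Complex.I * γ / 2)]

/-- rotation operator R_n̂(α) = exp(−i(α/2) n̂·σ) (closed form, n̂ a unit axis) -/
def Raxis (n : Fin 3 → ℝ) (α : ℝ) : Matrix (Fin 2) (Fin 2) ℂ :=
  (Real.cos (α / 2) : ℂ) • (1 : Matrix (Fin 2) (Fin 2) ℂ) -
    (Complex.I * (Real.sin (α / 2) : ℂ)) •
      ((n 0 : ℂ) • pauliX + (n 1 : ℂ) • pauliY + (n 2 : ℂ) • pauliZ)

/-- the SO(3) rotation by angle α about the unit axis n̂ (Rodrigues formula) -/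
def rot3 (n : Fin 3 → ℝ) (α : ℝ) (v : Fin 3 → ℝ) : Fin 3 → ℝ :=
  Real.cos α • v + Real.sin α • (crossProduct n v) +
    ((1 - Real.cos α) * (n ⬝ᵥ v)) • n

/-- the entangling circuit U_c(α,β,γ) -/
def Uc (α β γ : ℝ) : Matrix (Fin 2 × Fin 2) (Fin 2 × Fin 2) ℂ :=
  CNOT21 * ((1 : Matrix (Fin 2) (Fin 2) ℂ) ⊗ₖ Ry β) * CNOT12 * (Rz γ ⊗ₖ Ry α) * CNOT21

/-- the general two-qubit circuit U_g -/
def Ug (α β γ μ₁ μ₂ ν₁ ν₂ σ₁ : ℝ) : Matrix (Fin 2 × Fin 2) (Fin 2 × Fin 2) ℂ :=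
  ((Rz σ₁ * Ry ν₁ * Rz μ₁) ⊗ₖ (Ry ν₂ * Rz μ₂)) * Uc α β γ



/-! ### Product vectors and coherences -/

/-- The tensor product `x ⊗ y` of two (unnormalised) qubit vectors. -/
def tp (x y : Fin 2 → ℂ) : Fin 2 × Fin 2 → ℂ := fun p => x p.1 * y p.2

/-- The determinant of the coefficient matrix of a two-qubit vector; it vanishes exactly on
product vectors. -/
def qf (v : Fin 2 × Fin 2 → ℂ) : ℂ := v (0, 0) * v (1, 1) - v (0, 1) * v (1, 0)

/-- The polarization of `qf`, normalised so that `bf v v = 2 * qf v`. -/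
def bf (v w : Fin 2 × Fin 2 → ℂ) : ℂ :=
  v (0, 0) * w (1, 1) + v (1, 1) * w (0, 0) - v (0, 1) * w (1, 0) - v (1, 0) * w (0, 1)

/-- The vector orthogonal to `x` (of the same norm), i.e. the antipode on the Bloch sphere. -/
def perp (x : Fin 2 → ℂ) : Fin 2 → ℂ := ![-star (x 1), star (x 0)]

/-- The coherence of the first qubit: half the `xy`-Bloch vector `m`, read as a complex number. -/
def c1 (w : Fin 2 × Fin 2 → ℂ) : ℂ := star (w (0, 0)) * w (1, 0) + star (w (0, 1)) * w (1, 1)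

/-- The coherence of the second qubit: half the `xy`-Bloch vector `m`, read as a complex number. -/
def c2 (w : Fin 2 × Fin 2 → ℂ) : ℂ := star (w (0, 0)) * w (0, 1) + star (w (1, 0)) * w (1, 1)

/-- The relative phase (times a nonnegative weight) of the `xy`-Bloch vectors of `x` and `y`; it
is a nonnegative real exactly when these vectors are positively parallel or one of them is zero. -/
def rel (x y : Fin 2 → ℂ) : ℂ := star (x 0) * x 1 * star (star (y 0) * y 1)

/-- Reduction of an angle to `[0, 2π]`. -/
lemma exists_angle (t : ℝ) : ∃ φ ∈ Set.Icc 0 (2 * π),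
    Complex.exp (Complex.I * (φ : ℝ)) = Complex.exp (t * Complex.I) := by
  refine ⟨toIcoMod Real.two_pi_pos 0 t, ?_, ?_⟩
  · have := toIcoMod_mem_Ico Real.two_pi_pos 0 t
    rw [zero_add] at this
    exact ⟨this.1, this.2.le⟩
  · rw [Complex.exp_eq_exp_iff_exists_int]
    refine ⟨-toIcoDiv Real.two_pi_pos 0 t, ?_⟩
    rw [toIcoMod]
    push_cast [zsmul_eq_mul]
    ring

/-- Every qubit vector is a scalar multiple of some `ψ θ φ` with angles in the standard range. -/
lemma exists_smul_ψ (a : Fin 2 → ℂ) : ∃ (c : ℂ) (θ φ : ℝ), θ ∈ Set.Icc 0 π ∧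
    φ ∈ Set.Icc 0 (2 * π) ∧ a = c • ψ θ φ := by
  by_cases ha : a = 0
  · exact ⟨0, 0, 0, ⟨le_rfl, Real.pi_pos.le⟩, ⟨le_rfl, Real.two_pi_pos.le⟩, by simp [ha]⟩
  have hpos : 0 < ‖a 0‖ ^ 2 + ‖a 1‖ ^ 2 := by
    by_contra h
    have h0 : ‖a 0‖ = 0 := by nlinarith [sq_nonneg ‖a 0‖, sq_nonneg ‖a 1‖]
    have h1 : ‖a 1‖ = 0 := by nlinarith [sq_nonneg ‖a 0‖, sq_nonneg ‖a 1‖]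
    apply ha
    ext i
    fin_cases i
    · simpa using h0
    · simpa using h1
  set r := Real.sqrt (‖a 0‖ ^ 2 + ‖a 1‖ ^ 2) with hr
  have hr0 : 0 < r := Real.sqrt_pos.2 hpos
  have hr2 : r ^ 2 = ‖a 0‖ ^ 2 + ‖a 1‖ ^ 2 := Real.sq_sqrt hpos.le
  have hle : ‖a 0‖ / r ≤ 1 := by
    rw [div_le_one hr0]
    exact Real.le_sqrt_of_sq_le (by nlinarith [sq_nonneg ‖a 1‖])
  have hge : 0 ≤ ‖a 0‖ / r := by positivity
  obtain ⟨φ, hφ, he⟩ := exists_angle (Complex.arg (a 1) - Complex.arg (a 0))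
  refine ⟨r * Complex.exp (Complex.arg (a 0) * Complex.I), 2 * Real.arccos (‖a 0‖ / r), φ,
    ⟨?_, ?_⟩, hφ, ?_⟩
  · have := Real.arccos_nonneg (‖a 0‖ / r)
    linarith
  · have := Real.arccos_le_pi_div_two.2 hge
    linarith
  have hs : Real.sin (Real.arccos (‖a 0‖ / r)) = ‖a 1‖ / r := by
    rw [Real.sin_arccos]
    rw [← Real.sqrt_sq (show 0 ≤ ‖a 1‖ / r by positivity)]
    congr 1
    field_simp
    linarith
  have hrc : (r : ℂ) ≠ 0 := by exact_mod_cast hr0.ne'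
  have hh : 2 * Real.arccos (‖a 0‖ / r) / 2 = Real.arccos (‖a 0‖ / r) := by ring
  ext i
  fin_cases i
  · have := Complex.norm_mul_exp_arg_mul_I (a 0)
    simp only [ψ, hh, Real.cos_arccos (by linarith) hle, Fin.zero_eta, Pi.smul_apply,
      smul_eq_mul, Matrix.cons_val_zero]
    conv_lhs => rw [← this]
    push_cast
    field_simp
  · have := Complex.norm_mul_exp_arg_mul_I (a 1)
    simp only [ψ, hh, hs, Fin.mk_one, Pi.smul_apply, smul_eq_mul, Matrix.cons_val_one, he]
    conv_lhs => rw [← this]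
    push_cast
    rw [sub_mul, Complex.exp_sub]
    have := Complex.exp_ne_zero (Complex.arg (a 0) * Complex.I)
    field_simp

lemma dm_kron (U : Matrix (Fin 2 × Fin 2) (Fin 2 × Fin 2) ℂ) (x y : Fin 2 → ℂ) :
    U * (dm x ⊗ₖ dm y) * Uᴴ = vecMulVec (U *ᵥ tp x y) (star (U *ᵥ tp x y)) := by
  have : dm x ⊗ₖ dm y = vecMulVec (tp x y) (star (tp x y)) := by
    ext ⟨i, j⟩ ⟨k, l⟩
    simp [dm, tp, vecMulVec_apply, kroneckerMap_apply]
    ring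
  rw [this, mul_vecMulVec, vecMulVec_mul, star_mulVec]

lemma mvec_eq (τ : Matrix (Fin 2) (Fin 2) ℂ) :
    mvec τ = ![(τ 1 0 + τ 0 1).re, (τ 1 0 - τ 0 1).im] := by
  simp only [mvec, pauliX, pauliY, Matrix.trace_fin_two, mul_apply, Fin.sum_univ_two]
  ext i
  fin_cases i
  · simp
  · simp
    ring

lemma mvec_ptrace2 (w : Fin 2 × Fin 2 → ℂ) :
    mvec (ptrace2 (vecMulVec w (star w))) = ![2 * (c1 w).re, 2 * (c1 w).im] := by
  rw [mvec_eq]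
  ext i
  fin_cases i <;> simp [ptrace2, c1, vecMulVec_apply] <;> ring

lemma mvec_ptrace1 (w : Fin 2 × Fin 2 → ℂ) :
    mvec (ptrace1 (vecMulVec w (star w))) = ![2 * (c2 w).re, 2 * (c2 w).im] := by
  rw [mvec_eq]
  ext i
  fin_cases i <;> simp [ptrace1, c2, vecMulVec_apply] <;> ring

lemma mnorm_two (z : ℂ) : mnorm ![2 * z.re, 2 * z.im] = 2 * ‖z‖ := by
  have h : (2 * z.re) ^ 2 + (2 * z.im) ^ 2 = (2 * ‖z‖) ^ 2 := by
    rw [mul_pow 2 ‖z‖, Complex.sq_norm, Complex.normSq_apply]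
    ring
  simp only [mnorm, Matrix.cons_val_zero, Matrix.cons_val_one]
  rw [h, Real.sqrt_sq (by positivity)]

lemma two_ne (z : ℂ) (hz : z ≠ 0) : (![2 * z.re, 2 * z.im] : Fin 2 → ℝ) ≠ 0 := by
  intro h
  apply hz
  have h0 := congrFun h 0
  have h1 := congrFun h 1
  apply Complex.ext <;> simp_all

/-- Fidelity one means that the product of one coherence with the conjugate of the other is a
nonnegative real. -/
lemma nonneg_of_phaseFid (w : Fin 2 × Fin 2 → ℂ)
    (h : mvec (ptrace2 (vecMulVec w (star w))) ≠ 0 → mvec (ptrace1 (vecMulVec w (star w))) ≠ 0 →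
      phaseFid (ptrace2 (vecMulVec w (star w))) (ptrace1 (vecMulVec w (star w))) = 1) :
    0 ≤ c1 w * star (c2 w) := by
  by_cases h1 : c1 w = 0
  · simp [h1]
  by_cases h2 : c2 w = 0
  · simp [h2]
  have hf := h (by rw [mvec_ptrace2]; exact two_ne _ h1) (by rw [mvec_ptrace1]; exact two_ne _ h2)
  have p1 : 0 < ‖c1 w‖ := norm_pos_iff.2 h1
  have p2 : 0 < ‖c2 w‖ := norm_pos_iff.2 h2
  rw [phaseFid, mvec_ptrace2, mvec_ptrace1, mnorm_two, mnorm_two, div_eq_one_iff_eq (by positivity)]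
    at hf
  simp only [mdot, Matrix.cons_val_zero, Matrix.cons_val_one] at hf
  rw [← Complex.re_eq_norm, norm_mul, norm_star]
  simp
  linarith

/-! ### Coefficient bounds on the span of a product vector and its antipode -/

/-- A complex binary quadratic form all of whose zeros lie on `‖a‖ = ‖b‖` has outer coefficients
of equal modulus, and a middle coefficient bounded by twice that modulus. -/
lemma coeff_bounds (p m n : ℂ)
    (h : ∀ a b : ℂ, p * a ^ 2 + m * (a * b) + n * b ^ 2 = 0 → ‖a‖ = ‖b‖) :
    p ≠ 0 ∧ ‖n‖ = ‖p‖ ∧ ‖m‖ ≤ 2 * ‖p‖ := by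
  have hp : p ≠ 0 := by
    rintro rfl
    simpa using h 1 0 (by simp)
  obtain ⟨s, hs⟩ := IsAlgClosed.exists_pow_nat_eq (m ^ 2 - 4 * p * n) (n := 2) (by norm_num)
  have h1 := h ((-m + s) / (2 * p)) 1 (by field_simp; linear_combination hs)
  have h2 := h ((-m - s) / (2 * p)) 1 (by field_simp; linear_combination hs)
  have hn : n = p * (((-m + s) / (2 * p)) * ((-m - s) / (2 * p))) := by
    field_simp; linear_combination hs
  have hm : m = -(p * (((-m + s) / (2 * p)) + ((-m - s) / (2 * p)))) := by
    field_simp; ring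
  refine ⟨hp, ?_, ?_⟩
  · rw [hn, norm_mul, norm_mul, h1, h2]; simp
  · rw [hm, norm_neg, norm_mul]
    have := norm_add_le ((-m + s) / (2 * p)) ((-m - s) / (2 * p))
    rw [h1, h2, norm_one] at this
    nlinarith [norm_nonneg p]

lemma qf_comb (M : Matrix (Fin 2 × Fin 2) (Fin 2 × Fin 2) ℂ) (v w : Fin 2 × Fin 2 → ℂ) (a b : ℂ) :
    qf (M *ᵥ (a • v + b • w)) =
      qf (M *ᵥ v) * a ^ 2 + bf (M *ᵥ v) (M *ᵥ w) * (a * b) + qf (M *ᵥ w) * b ^ 2 := by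
  simp only [mulVec_add, mulVec_smul, qf, bf, Pi.add_apply, Pi.smul_apply, smul_eq_mul]
  ring

/-- On `a (x ⊗ y) + b (x⊥ ⊗ y⊥)` the coherences are those of `x` and `y`, both multiplied by
`‖a‖ ^ 2 - ‖b‖ ^ 2` and by the squared norm of the other factor. -/
lemma coherence_comb (x y : Fin 2 → ℂ) (a b : ℂ) :
    c1 (a • tp x y + b • tp (perp x) (perp y)) *
        star (c2 (a • tp x y + b • tp (perp x) (perp y))) =
      (((‖a‖ ^ 2 - ‖b‖ ^ 2) ^ 2 * (‖x 0‖ ^ 2 + ‖x 1‖ ^ 2) * (‖y 0‖ ^ 2 + ‖y 1‖ ^ 2) : ℝ) : ℂ) *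
        rel x y := by
  push_cast
  simp only [← Complex.conj_mul', c1, c2, tp, perp, rel, Pi.add_apply, Pi.smul_apply, smul_eq_mul,
    Matrix.cons_val_zero, Matrix.cons_val_one, Complex.star_def, map_add, map_mul, map_neg,
    Complex.conj_conj]
  ring

/-- A vector with `qf v = 0` is a product vector. -/
lemma exists_tp (v : Fin 2 × Fin 2 → ℂ) (h : qf v = 0) : ∃ a b, v = tp a b := by
  unfold qf at h
  by_cases h0 : v (0, 0) = 0 ∧ v (0, 1) = 0
  · refine ⟨![0, 1], ![v (1, 0), v (1, 1)], ?_⟩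
    ext ⟨i, j⟩
    fin_cases i <;> fin_cases j <;> simp [tp, h0]
  by_cases h00 : v (0, 0) = 0
  · have h01 : v (0, 1) ≠ 0 := fun h' => h0 ⟨h00, h'⟩
    refine ⟨![1, v (1, 1) / v (0, 1)], ![v (0, 0), v (0, 1)], ?_⟩
    ext ⟨i, j⟩
    fin_cases i <;> fin_cases j <;> simp [tp, h01]
    field_simp
    linear_combination -h
  · refine ⟨![1, v (1, 0) / v (0, 0)], ![v (0, 0), v (0, 1)], ?_⟩
    ext ⟨i, j⟩
    fin_cases i <;> fin_cases j <;> simp [tp, h00]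
    field_simp
    linear_combination h

/-- The consequence of perfect synchronization that drives the proof: for `x`, `y` whose
`xy`-Bloch vectors are not positively parallel, any product vector that `U` sends into the span of
`x ⊗ y` and its antipode has coefficients of equal modulus. -/
lemma bounds_of_generic {U : Matrix (Fin 2 × Fin 2) (Fin 2 × Fin 2) ℂ} (hU : U * Uᴴ = 1)
    (H : ∀ a b, 0 ≤ c1 (U *ᵥ tp a b) * star (c2 (U *ᵥ tp a b)))
    (x y : Fin 2 → ℂ) (hxy : ¬ 0 ≤ rel x y) :
    qf (Uᴴ *ᵥ tp x y) ≠ 0 ∧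
      ‖qf (Uᴴ *ᵥ tp (perp x) (perp y))‖ = ‖qf (Uᴴ *ᵥ tp x y)‖ ∧
      ‖bf (Uᴴ *ᵥ tp x y) (Uᴴ *ᵥ tp (perp x) (perp y))‖ ≤ 2 * ‖qf (Uᴴ *ᵥ tp x y)‖ := by
  apply coeff_bounds
  intro a b hab
  rw [← qf_comb] at hab
  obtain ⟨a', b', hv⟩ := exists_tp _ hab
  have h := H a' b'
  rw [← hv, mulVec_mulVec, hU, one_mulVec, coherence_comb] at h
  by_contra hne
  apply hxy
  have hx : x 0 ≠ 0 := fun h0 => hxy (by simp [rel, h0])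
  have hy : y 0 ≠ 0 := fun h0 => hxy (by simp [rel, h0])
  have hx' : 0 < ‖x 0‖ := norm_pos_iff.2 hx
  have hy' : 0 < ‖y 0‖ := norm_pos_iff.2 hy
  have hd : ‖a‖ ^ 2 - ‖b‖ ^ 2 ≠ 0 := by
    intro h0
    exact hne ((sq_eq_sq₀ (norm_nonneg a) (norm_nonneg b)).1 (by linarith))
  have hk : 0 < (‖a‖ ^ 2 - ‖b‖ ^ 2) ^ 2 * (‖x 0‖ ^ 2 + ‖x 1‖ ^ 2) *
    (‖y 0‖ ^ 2 + ‖y 1‖ ^ 2) := by positivity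
  generalize (‖a‖ ^ 2 - ‖b‖ ^ 2) ^ 2 * (‖x 0‖ ^ 2 + ‖x 1‖ ^ 2) *
    (‖y 0‖ ^ 2 + ‖y 1‖ ^ 2) = k at h hk
  rw [Complex.le_def] at h ⊢
  simp only [Complex.zero_re, Complex.zero_im, Complex.re_ofReal_mul, Complex.im_ofReal_mul] at h ⊢
  exact ⟨nonneg_of_mul_nonneg_right h.1 hk, by
    rcases mul_eq_zero.1 h.2.symm with h' | h'
    · exact absurd h' hk.ne'
    · exact h'.symm⟩

/-- Every pair `x`, `y` is a limit of pairs whose `xy`-Bloch vectors are not parallel: move along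
a real line towards a pair with orthogonal `xy`-Bloch vectors. -/
lemma mem_closure_generic (x y : Fin 2 → ℂ) :
    (x, y) ∈ closure {p : (Fin 2 → ℂ) × (Fin 2 → ℂ) | ¬ 0 ≤ rel p.1 p.2} := by
  let P : ℝ → Fin 2 → ℂ := fun s => x + (s : ℂ) • (![1, 1] - x)
  let Q : ℝ → Fin 2 → ℂ := fun s => y + (s : ℂ) • (![1, Complex.I] - y)
  let h : ℝ → ℝ := fun s => (rel (P s) (Q s)).im
  have hP : Continuous P := by fun_prop
  have hQ : Continuous Q := by fun_prop
  have han : AnalyticOnNhd ℝ h Set.univ := by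
    intro s _
    simp only [h, P, Q, rel, Pi.add_apply, Pi.smul_apply, Pi.sub_apply, smul_eq_mul,
      Matrix.cons_val_zero, Matrix.cons_val_one, Complex.star_def, Complex.mul_im, Complex.mul_re,
      Complex.add_re, Complex.add_im, Complex.sub_re, Complex.sub_im, Complex.conj_re,
      Complex.conj_im, Complex.ofReal_re, Complex.ofReal_im]
    fun_prop
  have h1 : h 1 ≠ 0 := by simp [h, P, Q, rel]
  have hfr : ∃ᶠ s in nhdsWithin (0 : ℝ) {0}ᶜ, h s ≠ 0 := by
    intro hev
    have hev' : ∀ᶠ s in nhdsWithin (0 : ℝ) {0}ᶜ, h s = 0 := hev.mono fun s hs => not_not.1 hs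
    exact h1 (han.eqOn_zero_of_preconnected_of_frequently_eq_zero isPreconnected_univ
      (Set.mem_univ 0) hev'.frequently (Set.mem_univ 1))
  have ht : Filter.Tendsto (fun s => (P s, Q s)) (nhdsWithin (0 : ℝ) {0}ᶜ) (nhds (x, y)) := by
    have := (hP.prodMk hQ).tendsto 0
    simp only [P, Q, Complex.ofReal_zero, zero_smul, add_zero] at this
    exact this.mono_left nhdsWithin_le_nhds
  refine mem_closure_of_frequently_of_tendsto (hfr.mono fun s hs h0 => ?_) ht
  exact hs (Complex.le_def.1 h0).2.symm

/-- By continuity, the coefficient bounds persist for all `x` and `y`. -/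
lemma bounds_all {U : Matrix (Fin 2 × Fin 2) (Fin 2 × Fin 2) ℂ} (hU : U * Uᴴ = 1)
    (H : ∀ a b, 0 ≤ c1 (U *ᵥ tp a b) * star (c2 (U *ᵥ tp a b)))
    (x y : Fin 2 → ℂ) :
    ‖qf (Uᴴ *ᵥ tp (perp x) (perp y))‖ = ‖qf (Uᴴ *ᵥ tp x y)‖ ∧
      ‖bf (Uᴴ *ᵥ tp x y) (Uᴴ *ᵥ tp (perp x) (perp y))‖ ≤ 2 * ‖qf (Uᴴ *ᵥ tp x y)‖ := by
  have e1 : Continuous fun p : (Fin 2 → ℂ) × (Fin 2 → ℂ) => Uᴴ *ᵥ tp p.1 p.2 := by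
    unfold tp
    fun_prop
  have e2 : Continuous fun p : (Fin 2 → ℂ) × (Fin 2 → ℂ) =>
      Uᴴ *ᵥ tp (perp p.1) (perp p.2) := by
    unfold tp perp
    fun_prop
  have f1 : Continuous fun p : (Fin 2 → ℂ) × (Fin 2 → ℂ) => ‖qf (Uᴴ *ᵥ tp p.1 p.2)‖ := by
    unfold qf
    fun_prop
  have f2 : Continuous fun p : (Fin 2 → ℂ) × (Fin 2 → ℂ) =>
      ‖qf (Uᴴ *ᵥ tp (perp p.1) (perp p.2))‖ := by
    unfold qf
    fun_prop
  have f3 : Continuous fun p : (Fin 2 → ℂ) × (Fin 2 → ℂ) =>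
      ‖bf (Uᴴ *ᵥ tp p.1 p.2) (Uᴴ *ᵥ tp (perp p.1) (perp p.2))‖ := by
    unfold bf
    fun_prop
  have f4 : Continuous fun p : (Fin 2 → ℂ) × (Fin 2 → ℂ) => 2 * ‖qf (Uᴴ *ᵥ tp p.1 p.2)‖ :=
    continuous_const.mul f1
  have key : ∀ F G : (Fin 2 → ℂ) × (Fin 2 → ℂ) → ℝ, Continuous F → Continuous G →
      (∀ p, ¬ 0 ≤ rel p.1 p.2 → F p ≤ G p) → F (x, y) ≤ G (x, y) := fun F G hF hG hFG =>
    closure_minimal (t := {p | F p ≤ G p}) hFG (isClosed_le hF hG) (mem_closure_generic x y)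
  have k1 := key _ _ f2 f1 fun p hp => (bounds_of_generic hU H p.1 p.2 hp).2.1.le
  have k2 := key _ _ f1 f2 fun p hp => (bounds_of_generic hU H p.1 p.2 hp).2.1.ge
  have k3 := key _ _ f3 f4 fun p hp => (bounds_of_generic hU H p.1 p.2 hp).2.2
  exact ⟨le_antisymm k1 k2, k3⟩

/-! ### Zeros at the poles and the contradiction -/

/-- If the span of two orthogonal nonzero vectors consists of product vectors, then its orthogonal
complement does, too: such a span is `a ⊗ ℂ²` or `ℂ² ⊗ b`. -/
lemma qf_orthogonal (v w u : Fin 2 × Fin 2 → ℂ) (hv : v ≠ 0) (hw : w ≠ 0)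
    (qv : qf v = 0) (qw : qf w = 0) (hb : bf v w = 0) (hvw : star v ⬝ᵥ w = 0)
    (hvu : star v ⬝ᵥ u = 0) (hwu : star w ⬝ᵥ u = 0) : qf u = 0 := by
  obtain ⟨a, b, rfl⟩ := exists_tp v qv
  have norm_ne : ∀ c : Fin 2 → ℂ, c ≠ 0 → star c ⬝ᵥ c ≠ 0 := fun c hc h =>
    hc (dotProduct_star_self_eq_zero.1 h)
  have ha : star a ⬝ᵥ a ≠ 0 := norm_ne a (by rintro rfl; exact hv (by ext; simp [tp]))
  have hb' : star b ⬝ᵥ b ≠ 0 := norm_ne b (by rintro rfl; exact hv (by ext; simp [tp]))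
  -- Coordinates in the orthogonal basis `a ⊗ b`, `a ⊗ b⊥`, `a⊥ ⊗ b`, `a⊥ ⊗ b⊥`; the last one is
  -- `bf (tp a b)`.
  have id1 : ∀ z, (star (tp a b) ⬝ᵥ z) * bf (tp a b) z -
      (star (tp a (perp b)) ⬝ᵥ z) * (star (tp (perp a) b) ⬝ᵥ z) =
      (star a ⬝ᵥ a) * (star b ⬝ᵥ b) * qf z := by
    intro z
    simp [tp, perp, bf, qf, dotProduct, Fintype.sum_prod_type]
    ring
  have id2 : ∀ y z, (star a ⬝ᵥ a) * (star b ⬝ᵥ b) * (star y ⬝ᵥ z) =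
      star (star (tp a b) ⬝ᵥ y) * (star (tp a b) ⬝ᵥ z) +
      star (star (tp a (perp b)) ⬝ᵥ y) * (star (tp a (perp b)) ⬝ᵥ z) +
      star (star (tp (perp a) b) ⬝ᵥ y) * (star (tp (perp a) b) ⬝ᵥ z) +
      star (bf (tp a b) y) * bf (tp a b) z := by
    intro y z
    simp [tp, perp, bf, dotProduct, Fintype.sum_prod_type]
    ring
  have hww : star w ⬝ᵥ w ≠ 0 := fun h =>
    hw (dotProduct_star_self_eq_zero.1 h)
  have e1 := id1 w
  have e2 := id2 w w
  have e3 := id2 w u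
  have e4 := id1 u
  rw [hb, hvw, qw] at e1
  rw [hb, hvw, star_zero] at e2
  rw [hb, hvw, hwu, star_zero] at e3
  rw [hvu] at e4
  have hne := mul_ne_zero (mul_ne_zero ha hb') hww
  have hz : (star (tp a (perp b)) ⬝ᵥ u) * (star (tp (perp a) b) ⬝ᵥ u) = 0 := by
    rcases mul_eq_zero.1 (show (star (tp a (perp b)) ⬝ᵥ w) * (star (tp (perp a) b) ⬝ᵥ w) = 0 by
      linear_combination -e1) with h | h
    · rw [h, star_zero] at e2 e3
      have h' : star (star (tp (perp a) b) ⬝ᵥ w) ≠ 0 := fun h0 =>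
        hne (by rw [e2, h0]; simp)
      have : star (tp (perp a) b) ⬝ᵥ u = 0 := by
        refine (mul_eq_zero.1 (?_ : star (star (tp (perp a) b) ⬝ᵥ w) * _ = 0)).resolve_left h'
        linear_combination -e3
      rw [this, mul_zero]
    · rw [h, star_zero] at e2 e3
      have h' : star (star (tp a (perp b)) ⬝ᵥ w) ≠ 0 := fun h0 =>
        hne (by rw [e2, h0]; simp)
      have : star (tp a (perp b)) ⬝ᵥ u = 0 := by
        refine (mul_eq_zero.1 (?_ : star (star (tp a (perp b)) ⬝ᵥ w) * _ = 0)).resolve_left h'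
        linear_combination -e3
      rw [this, zero_mul]
  rw [hz] at e4
  have : (star a ⬝ᵥ a) * (star b ⬝ᵥ b) * qf u = 0 := by linear_combination -e4
  exact (mul_eq_zero.1 this).resolve_left (mul_ne_zero ha hb')

lemma inner_unitary {U : Matrix (Fin 2 × Fin 2) (Fin 2 × Fin 2) ℂ} (hU : U * Uᴴ = 1)
    (v w : Fin 2 × Fin 2 → ℂ) : star (Uᴴ *ᵥ v) ⬝ᵥ (Uᴴ *ᵥ w) = star v ⬝ᵥ w := by
  rw [star_mulVec, conjTranspose_conjTranspose, ← dotProduct_mulVec, mulVec_mulVec, hU,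
    one_mulVec]

lemma unitary_ne_zero {U : Matrix (Fin 2 × Fin 2) (Fin 2 × Fin 2) ℂ} (hU : U * Uᴴ = 1)
    {v : Fin 2 × Fin 2 → ℂ} (hv : v ≠ 0) : Uᴴ *ᵥ v ≠ 0 := by
  intro h
  apply hv
  rw [← one_mulVec v, ← hU, ← mulVec_mulVec, h, mulVec_zero]

/-- If `x` is not a pole of the Bloch sphere, then `Uᴴ` sends `x ⊗ e₀` to a product vector:
`x ⊗ y` goes to a product vector for some `y`, hence so does `x ⊗ y⊥`, and this forces `y` to be a
pole since `y` and `y⊥` have opposite `xy`-Bloch vectors. -/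
lemma qf_pole {U : Matrix (Fin 2 × Fin 2) (Fin 2 × Fin 2) ℂ} (hU : U * Uᴴ = 1)
    (H : ∀ a b, 0 ≤ c1 (U *ᵥ tp a b) * star (c2 (U *ᵥ tp a b))) (u : ℂ) (hu : u ≠ 0) :
    qf (Uᴴ *ᵥ tp ![1, u] ![1, 0]) = 0 := by
  by_contra hp
  set p := qf (Uᴴ *ᵥ tp ![1, u] ![1, 0]) with hpd
  set m := bf (Uᴴ *ᵥ tp ![1, u] ![1, 0]) (Uᴴ *ᵥ tp ![1, u] ![0, 1]) with hmd
  set n := qf (Uᴴ *ᵥ tp ![1, u] ![0, 1]) with hnd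
  obtain ⟨s, hs⟩ := IsAlgClosed.exists_pow_nat_eq (m ^ 2 - 4 * p * n) (n := 2) (by norm_num)
  obtain ⟨r, hr⟩ : ∃ r, p * r ^ 2 + m * (r * 1) + n * 1 ^ 2 = 0 :=
    ⟨(-m + s) / (2 * p), by field_simp; linear_combination hs⟩
  have hy : r • tp ![1, u] ![1, 0] + (1 : ℂ) • tp ![1, u] ![0, 1] = tp ![1, u] ![r, 1] := by
    ext ⟨i, j⟩
    fin_cases i <;> fin_cases j <;> simp [tp, mul_comm]
  rw [hpd, hmd, hnd, ← qf_comb, hy] at hr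
  obtain ⟨hb1, hb2⟩ := bounds_all hU H ![1, u] ![r, 1]
  rw [hr, norm_zero, norm_eq_zero] at hb1
  rw [hr, norm_zero, mul_zero, norm_le_zero_iff] at hb2
  have hq : qf (Uᴴ *ᵥ tp ![1, u] (perp ![r, 1])) = 0 := by
    apply qf_orthogonal _ _ _ _ _ hr hb1 hb2
    · rw [inner_unitary hU]
      simp [tp, perp, dotProduct, Fintype.sum_prod_type]
      ring
    · rw [inner_unitary hU]
      simp [tp, perp, dotProduct, Fintype.sum_prod_type]
      ring
    · rw [inner_unitary hU]
      simp [tp, perp, dotProduct, Fintype.sum_prod_type]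
      ring
    · refine unitary_ne_zero hU fun h => ?_
      simpa [tp] using congrFun h (0, 1)
    · refine unitary_ne_zero hU fun h => ?_
      simpa [tp, perp] using congrFun h (1, 0)
  have g1 : 0 ≤ rel ![1, u] ![r, 1] := by
    by_contra h
    exact (bounds_of_generic hU H _ _ h).1 hr
  have g2 : 0 ≤ rel ![1, u] (perp ![r, 1]) := by
    by_contra h
    exact (bounds_of_generic hU H _ _ h).1 hq
  have hneg : rel ![1, u] (perp ![r, 1]) = -rel ![1, u] ![r, 1] := by
    simp [rel, perp]
  rw [hneg] at g2
  have h0 : rel ![1, u] ![r, 1] = 0 := le_antisymm (neg_nonneg.1 g2) g1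
  have hr0 : r = 0 := by simpa [rel, hu] using h0
  apply hp
  have hperp : tp ![1, u] (perp ![r, 1]) =
      (-1 : ℂ) • tp ![1, u] ![1, 0] + (0 : ℂ) • tp ![1, u] ![1, 0] := by
    ext ⟨i, j⟩
    fin_cases i <;> fin_cases j <;> simp [tp, perp, hr0]
  rw [hperp, qf_comb] at hq
  simpa using hq


/-- Theorem 1: no U ∈ SU(4) achieves perfect quantum-phase
synchronization for all initial pure product states. -/
theorem no_perfect_qps (U : Matrix (Fin 2 × Fin 2) (Fin 2 × Fin 2) ℂ)
    (hU : Uᴴ * U = 1) (hdet : U.det = 1) :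
    ∃ θ₁ φ₁ θ₂ φ₂ : ℝ,
      θ₁ ∈ Set.Icc 0 π ∧ φ₁ ∈ Set.Icc 0 (2 * π) ∧
      θ₂ ∈ Set.Icc 0 π ∧ φ₂ ∈ Set.Icc 0 (2 * π) ∧
      mvec (ptrace2 (U * (dm (ψ θ₁ φ₁) ⊗ₖ dm (ψ θ₂ φ₂)) * Uᴴ)) ≠ 0 ∧
      mvec (ptrace1 (U * (dm (ψ θ₁ φ₁) ⊗ₖ dm (ψ θ₂ φ₂)) * Uᴴ)) ≠ 0 ∧
      PSF (dm (ψ θ₁ φ₁) ⊗ₖ dm (ψ θ₂ φ₂)) U ≠ 1 := by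
  have hU' : U * Uᴴ = 1 := mul_eq_one_comm.1 hU
  by_contra hcon
  push Not at hcon
  have H : ∀ a b, 0 ≤ c1 (U *ᵥ tp a b) * star (c2 (U *ᵥ tp a b)) := by
    intro a b
    obtain ⟨c, θ₁, φ₁, h1, h2, rfl⟩ := exists_smul_ψ a
    obtain ⟨d, θ₂, φ₂, h3, h4, rfl⟩ := exists_smul_ψ b
    have h := hcon θ₁ φ₁ θ₂ φ₂ h1 h2 h3 h4
    simp only [PSF, dm_kron] at h
    have hn := nonneg_of_phaseFid _ h
    have ht : tp (c • ψ θ₁ φ₁) (d • ψ θ₂ φ₂) = (c * d) • tp (ψ θ₁ φ₁) (ψ θ₂ φ₂) := by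
      ext p
      simp [tp]
      ring
    rw [ht, mulVec_smul]
    generalize U *ᵥ tp (ψ θ₁ φ₁) (ψ θ₂ φ₂) = w at hn
    have hc : c1 ((c * d) • w) * star (c2 ((c * d) • w)) =
        (star (c * d) * (c * d)) * (star (c * d) * (c * d)) * (c1 w * star (c2 w)) := by
      simp [c1, c2]
      ring
    rw [hc]
    exact mul_nonneg (mul_nonneg (star_mul_self_nonneg _) (star_mul_self_nonneg _)) hn
  set f00 := Uᴴ *ᵥ tp ![1, 0] ![1, 0] with h00
  set f01 := Uᴴ *ᵥ tp ![1, 0] ![0, 1] with h01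
  set f10 := Uᴴ *ᵥ tp ![0, 1] ![1, 0] with h10
  set f11 := Uᴴ *ᵥ tp ![0, 1] ![0, 1] with h11
  -- The expansions of `qf (Uᴴ (x ⊗ e₀)) = 0` and of `m = 0` at `(x, e₀)` for `x = (1, u)`.
  have K : ∀ u : ℂ, u ≠ 0 → qf f00 + bf f00 f10 * u + qf f10 * u ^ 2 = 0 ∧
      -star u * bf f00 f01 + bf f00 f11 - u * star u * bf f10 f01 + u * bf f10 f11 = 0 := by
    intro u hu
    have hq := qf_pole hU' H u hu
    have hb := (bounds_all hU' H ![1, u] ![1, 0]).2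
    rw [hq, norm_zero, mul_zero, norm_le_zero_iff] at hb
    have t1 : tp ![1, u] ![1, 0] =
        (1 : ℂ) • tp ![1, 0] ![1, 0] + u • tp ![0, 1] ![1, 0] := by
      ext ⟨i, j⟩
      fin_cases i <;> fin_cases j <;> simp [tp]
    have t2 : tp (perp ![1, u]) (perp ![1, 0]) =
        (-star u) • tp ![1, 0] ![0, 1] + (1 : ℂ) • tp ![0, 1] ![0, 1] := by
      ext ⟨i, j⟩
      fin_cases i <;> fin_cases j <;> simp [tp, perp]
    constructor
    · rw [t1, qf_comb] at hq
      linear_combination hq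
    · rw [t1, t2] at hb
      simp only [mulVec_add, mulVec_smul, ← h00, ← h01, ← h10, ← h11] at hb
      rw [← hb]
      simp only [bf, Pi.add_apply, Pi.smul_apply, smul_eq_mul]
      ring
  -- These four values of `u` separate the coefficients.
  obtain ⟨a1, b1⟩ := K 1 one_ne_zero
  obtain ⟨a2, b2⟩ := K (-1) (by simp)
  obtain ⟨a3, b3⟩ := K 2 two_ne_zero
  obtain ⟨-, b4⟩ := K Complex.I Complex.I_ne_zero
  simp only [star_neg, star_one, Complex.star_def, Complex.conj_I, Complex.conj_ofNat]
    at b1 b2 b3 b4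
  have z01 : bf f00 f01 = 0 := by
    have : Complex.I * (bf f00 f01 + bf f10 f11) = 0 := by
      linear_combination b4 - (b1 + b2) / 2 - bf f10 f01 * Complex.I_sq
    have := (mul_eq_zero.1 this).resolve_left Complex.I_ne_zero
    linear_combination this / 2 - (b1 - b2) / 4
  have z11 : bf f00 f11 = 0 := by
    linear_combination (2 / 3) * (b1 + b2) - b3 / 3 + (b1 - b2) / 3
  have z10 : bf f00 f10 = 0 := by linear_combination (a1 - a2) / 2
  have z00 : bf f00 f00 = 0 := by
    have : qf f00 = 0 := by
      linear_combination (2 / 3) * (a1 + a2) - a3 / 3 + (a1 - a2) / 3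
    simp only [qf] at this
    simp only [bf]
    linear_combination 2 * this
  have hall : ∀ v, bf f00 v = 0 := by
    intro v
    have hv : v = Uᴴ *ᵥ (U *ᵥ v) := by rw [mulVec_mulVec, hU, one_mulVec]
    generalize U *ᵥ v = w at hv
    have hw : w = w (0, 0) • tp ![1, 0] ![1, 0] + w (0, 1) • tp ![1, 0] ![0, 1] +
        w (1, 0) • tp ![0, 1] ![1, 0] + w (1, 1) • tp ![0, 1] ![0, 1] := by
      ext ⟨i, j⟩
      fin_cases i <;> fin_cases j <;> simp [tp]
    rw [hw] at hv
    simp only [mulVec_add, mulVec_smul, ← h00, ← h01, ← h10, ← h11] at hv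
    have : bf f00 v = w (0, 0) * bf f00 f00 + w (0, 1) * bf f00 f01 + w (1, 0) * bf f00 f10 +
        w (1, 1) * bf f00 f11 := by
      rw [hv]
      simp only [bf, Pi.add_apply, Pi.smul_apply, smul_eq_mul]
      ring
    rw [this, z00, z01, z10, z11]
    simp
  have hf : f00 ≠ 0 := unitary_ne_zero hU' fun h => by
    simpa [tp] using congrFun h (0, 0)
  apply hf
  have k1 := hall (Pi.single (0, 0) 1)
  have k2 := hall (Pi.single (0, 1) 1)
  have k3 := hall (Pi.single (1, 0) 1)
  have k4 := hall (Pi.single (1, 1) 1)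
  simp [bf] at k1 k2 k3 k4
  ext ⟨i, j⟩
  fin_cases i <;> fin_cases j <;> simp [k1, k2, k3, k4]

end
end

section
/- (Theorem 2 of the paper.) For every unitary U ∈ SU(4), the set of parameter tuples (θ₁, φ₁, θ₂, φ₂) ∈ [0,π]×[0,2π]×[0,π]×[0,2π] for which the phase synchronization fidelity F(|ψ(θ₁,φ₁)⟩⟨ψ(θ₁,φ₁)| ⊗ |ψ(θ₂,φ₂)⟩⟨ψ(θ₂,φ₂)|, U) is undefined (i.e. at least one of the two final reduced Bloch vectors has zero projection into the xy-plane) has Lebesgue measure zero in R⁴. -/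
/-!
If a projected reduced Bloch vector vanishes then, the reduced state being Hermitian, its
off-diagonal entry vanishes. That entry equals `trace (W * (ρ₁ ⊗ ρ₂))`, where `W` is the conjugate
by `U` of `E ⊗ 1` or `1 ⊗ E` with `E` a matrix unit, so that `W ≠ 0`.

It remains to see that a nonzero linear functional on two-qubit matrices is nonzero at almost every
product of pure states. A nonzero trigonometric polynomial `a + b cos t + d sin t` is analytic, so
it vanishes only on a null set (`ae_trig_ne_zero`). Since `trace (M * |ψ(θ,φ)⟩⟨ψ(θ,φ)|)` has this
form in `φ`, with coefficients of this form in `θ`, two applications give the one-qubit case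
(`ae_trace_dm_ne_zero`). For two qubits, fixing the first state leaves a one-qubit functional whose
matrix entries are one-qubit functionals of the first state, not all zero, so the one-qubit case
applies twice (`ae_trace_kronecker_ne_zero`). Fubini turns the iterated statement into a statement
about Lebesgue measure on `ℝ⁴` (`volume_zero_of_ae`).
-/

open Matrix Complex Real Kronecker
open scoped ComplexOrder

noncomputable section

/-! ### Nonzero functionals on pure product states -/

open MeasureTheory in
/-- A nonzero trigonometric polynomial of degree at most one, with complex coefficients, vanishes
only on a null set of the real line. -/
theorem ae_trig_ne_zero (a b d : ℂ) (h : ¬(a = 0 ∧ b = 0 ∧ d = 0)) :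
    ∀ᵐ t : ℝ, a + b * (Real.cos t : ℂ) + d * (Real.sin t : ℂ) ≠ 0 := by
  have hf : AnalyticOnNhd ℝ
      (fun t : ℝ => a + b * (Real.cos t : ℂ) + d * (Real.sin t : ℂ)) Set.univ := by
    intro t _
    have hc : AnalyticAt ℝ (fun t : ℝ => (Real.cos t : ℂ)) t :=
      (Complex.ofRealCLM.analyticAt _).comp (Real.analyticAt_cos (x := t))
    have hs : AnalyticAt ℝ (fun t : ℝ => (Real.sin t : ℂ)) t :=
      (Complex.ofRealCLM.analyticAt _).comp (Real.analyticAt_sin (x := t))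
    exact (analyticAt_const.add (analyticAt_const.mul hc)).add (analyticAt_const.mul hs)
  rcases hf.eqOn_zero_or_eventually_ne_zero_of_preconnected isPreconnected_univ with h0 | h1
  · exfalso
    have e0 := h0 (Set.mem_univ 0)
    have e1 := h0 (Set.mem_univ π)
    have e2 := h0 (Set.mem_univ (π / 2))
    simp only [Real.cos_zero, Real.sin_zero, Real.cos_pi, Real.sin_pi, Real.cos_pi_div_two,
      Real.sin_pi_div_two, Pi.zero_apply] at e0 e1 e2
    push_cast at e0 e1 e2
    have ha : a = 0 := by linear_combination (e0 + e1) / 2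
    refine h ⟨ha, ?_, ?_⟩
    · linear_combination (e0 - e1) / 2
    · linear_combination e2 - ha
  · have := ae_restrict_le_codiscreteWithin (μ := (volume : Measure ℝ)) MeasurableSet.univ h1
    rwa [Measure.restrict_univ] at this

/-- A one-qubit functional evaluated at a pure state, in terms of the spherical angles. -/
theorem trace_mul_dm (M : Matrix (Fin 2) (Fin 2) ℂ) (θ φ : ℝ) :
    trace (M * dm (ψ θ φ)) =
      ((M 0 0 + M 1 1) / 2 + (M 0 0 - M 1 1) / 2 * (Real.cos θ : ℂ) + 0 * (Real.sin θ : ℂ)) +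
      ((Real.sin θ : ℂ) / 2 * (M 0 1 + M 1 0)) * (Real.cos φ : ℂ) +
      ((Real.sin θ : ℂ) / 2 * (Complex.I * (M 0 1 - M 1 0))) * (Real.sin φ : ℂ) := by
  have hc : (Real.cos θ : ℂ) = 2 * (Real.cos (θ / 2) : ℂ) ^ 2 - 1 := by
    rw [← Complex.ofReal_pow, Real.cos_sq]
    push_cast
    ring_nf
  have hs : (Real.sin θ : ℂ) = 2 * (Real.sin (θ / 2) : ℂ) * (Real.cos (θ / 2) : ℂ) := by
    have := Real.sin_two_mul (θ / 2)
    rw [mul_div_cancel₀ θ two_ne_zero] at this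
    exact_mod_cast this
  have hp : (Real.sin (θ / 2) : ℂ) ^ 2 + (Real.cos (θ / 2) : ℂ) ^ 2 = 1 := by
    exact_mod_cast Real.sin_sq_add_cos_sq (θ / 2)
  have hq : (Real.sin φ : ℂ) ^ 2 + (Real.cos φ : ℂ) ^ 2 = 1 := by
    exact_mod_cast Real.sin_sq_add_cos_sq φ
  have he : Complex.exp (Complex.I * φ) = (Real.cos φ : ℂ) + Complex.I * (Real.sin φ : ℂ) := by
    rw [mul_comm, Complex.exp_mul_I, Complex.ofReal_cos, Complex.ofReal_sin, mul_comm Complex.I]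
  rw [hc, hs]
  simp only [dm, ψ, he, trace, diag_apply, mul_apply, Fin.sum_univ_two, vecMulVec_apply,
    Pi.star_apply, cons_val_zero, cons_val_one, star_def, map_mul, map_add, Complex.conj_ofReal,
    Complex.conj_I]
  generalize (Real.cos (θ / 2) : ℂ) = c at *
  generalize (Real.sin (θ / 2) : ℂ) = s at *
  generalize (Real.cos φ : ℂ) = C at *
  generalize (Real.sin φ : ℂ) = S at *
  linear_combination M 1 1 * hp + M 1 1 * s ^ 2 * hq - M 1 1 * s ^ 2 * S ^ 2 * Complex.I_sq

open MeasureTheory in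
theorem ae_trace_dm_ne_zero (M : Matrix (Fin 2) (Fin 2) ℂ) (hM : M ≠ 0) :
    ∀ᵐ θ : ℝ, ∀ᵐ φ : ℝ, trace (M * dm (ψ θ φ)) ≠ 0 := by
  simp_rw [trace_mul_dm]
  by_cases h : (M 0 0 + M 1 1) / 2 = 0 ∧ (M 0 0 - M 1 1) / 2 = 0
  · -- `M` is off-diagonal, so the value is `sin θ` times a nonzero trigonometric form in `φ`.
    filter_upwards [ae_trig_ne_zero 0 0 1 (by simp)] with θ hθ
    have hs : (Real.sin θ : ℂ) ≠ 0 := by simpa only [zero_mul, zero_add, one_mul] using hθ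
    refine ae_trig_ne_zero _ _ _ ?_
    rintro ⟨-, h1, h2⟩
    have h1' := (mul_eq_zero.1 h1).resolve_left (div_ne_zero hs two_ne_zero)
    have h2' := (mul_eq_zero.1 ((mul_eq_zero.1 h2).resolve_left
      (div_ne_zero hs two_ne_zero))).resolve_left Complex.I_ne_zero
    apply hM
    ext i j
    fin_cases i <;> fin_cases j <;> simp only [Fin.zero_eta, Fin.mk_one, Matrix.zero_apply]
    · linear_combination h.1 + h.2
    · linear_combination (h1' + h2') / 2
    · linear_combination (h1' - h2') / 2
    · linear_combination h.1 - h.2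
  · -- The constant term in `φ` is already nonzero for almost every `θ`.
    filter_upwards [ae_trig_ne_zero ((M 0 0 + M 1 1) / 2) ((M 0 0 - M 1 1) / 2) 0
      (fun hz => h ⟨hz.1, hz.2.1⟩)] with θ hθ
    exact ae_trig_ne_zero _ _ _ (fun hz => hθ hz.1)

/-- The `(l, k)` block of a two-qubit matrix: the rows with second index `l` and the columns with
second index `k`. -/
def blk (W : Matrix (Fin 2 × Fin 2) (Fin 2 × Fin 2) ℂ) (l k : Fin 2) :
    Matrix (Fin 2) (Fin 2) ℂ :=
  fun j i => W (j, l) (i, k)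

/-- Contracting `W` with `A` on the first qubit leaves a one-qubit functional of `B`. -/
theorem trace_mul_kronecker (W : Matrix (Fin 2 × Fin 2) (Fin 2 × Fin 2) ℂ)
    (A B : Matrix (Fin 2) (Fin 2) ℂ) :
    trace (W * (A ⊗ₖ B)) = trace (Matrix.of (fun l k => trace (blk W l k * A)) * B) := by
  simp only [trace, diag_apply, mul_apply, Fintype.sum_prod_type, Fin.sum_univ_two, blk,
    kroneckerMap_apply, Matrix.of_apply]
  ring

open MeasureTheory in
theorem ae_trace_kronecker_ne_zero (W : Matrix (Fin 2 × Fin 2) (Fin 2 × Fin 2) ℂ) (hW : W ≠ 0) :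
    ∀ᵐ θ₁ : ℝ, ∀ᵐ φ₁ : ℝ, ∀ᵐ θ₂ : ℝ, ∀ᵐ φ₂ : ℝ,
      trace (W * (dm (ψ θ₁ φ₁) ⊗ₖ dm (ψ θ₂ φ₂))) ≠ 0 := by
  obtain ⟨l, k, hlk⟩ : ∃ l k, blk W l k ≠ 0 := by
    by_contra! h
    apply hW
    ext ⟨j, l⟩ ⟨i, k⟩
    exact congrFun (congrFun (h l k) j) i
  filter_upwards [ae_trace_dm_ne_zero _ hlk] with θ₁ h1
  filter_upwards [h1] with φ₁ h2
  simp_rw [trace_mul_kronecker]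
  refine ae_trace_dm_ne_zero _ fun h => h2 ?_
  exact congrFun (congrFun h l) k

/-! ### Passage to Lebesgue measure on `ℝ⁴` -/

open MeasureTheory in
/-- Fubini: a closed subset of `ℝ⁴` avoided by almost every point, in the iterated sense, is
null. -/
theorem volume_zero_of_ae (S : Set (ℝ × ℝ × ℝ × ℝ)) (hS : IsClosed S)
    (h : ∀ᵐ a : ℝ, ∀ᵐ b : ℝ, ∀ᵐ c : ℝ, ∀ᵐ d : ℝ, (a, b, c, d) ∉ S) : volume S = 0 := by
  rw [Measure.volume_eq_prod, Measure.measure_prod_null hS.measurableSet]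
  filter_upwards [h] with a ha
  have hSa : IsClosed (Prod.mk a ⁻¹' S) := hS.preimage (by fun_prop)
  rw [Measure.volume_eq_prod, Pi.zero_apply, Measure.measure_prod_null hSa.measurableSet]
  filter_upwards [ha] with b hb
  have hSb : IsClosed (Prod.mk b ⁻¹' (Prod.mk a ⁻¹' S)) := hSa.preimage (by fun_prop)
  rw [Measure.volume_eq_prod, Pi.zero_apply, Measure.measure_prod_null hSb.measurableSet]
  filter_upwards [hb] with c hc
  rw [Pi.zero_apply, measure_eq_zero_iff_ae_notMem]
  exact hc

open MeasureTheory in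
theorem volume_trace_eq_zero (W : Matrix (Fin 2 × Fin 2) (Fin 2 × Fin 2) ℂ) (hW : W ≠ 0) :
    volume {q : ℝ × ℝ × ℝ × ℝ |
      trace (W * (dm (ψ q.1 q.2.1) ⊗ₖ dm (ψ q.2.2.1 q.2.2.2))) = 0} = 0 := by
  refine volume_zero_of_ae _ ?_ (ae_trace_kronecker_ne_zero W hW)
  refine isClosed_eq ?_ continuous_const
  simp only [trace_mul_kronecker, trace_mul_dm, Matrix.of_apply]
  fun_prop

/-! ### Reduced states and their off-diagonal entries -/

/-- For a Hermitian matrix the Bloch projection determines the off-diagonal entry. -/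
theorem offdiag_eq_zero_of_mvec (τ : Matrix (Fin 2) (Fin 2) ℂ) (hτ : τ.IsHermitian)
    (h : mvec τ = 0) : τ 0 1 = 0 := by
  have h0 := congrFun h 0
  have h1 := congrFun h 1
  have hc := hτ.apply 0 1
  have hre : (τ 1 0).re = (τ 0 1).re := by rw [← hc]; simp
  have him : (τ 1 0).im = -(τ 0 1).im := by rw [← hc]; simp
  simp [mvec, pauliX, pauliY, trace, vecMul, dotProduct, Fin.sum_univ_two] at h0 h1
  apply Complex.ext <;> simp <;> linarith

theorem ptrace2_offdiag (R : Matrix (Fin 2 × Fin 2) (Fin 2 × Fin 2) ℂ) :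
    ptrace2 R 0 1 =
      trace ((Matrix.single 1 0 (1 : ℂ) ⊗ₖ (1 : Matrix (Fin 2) (Fin 2) ℂ)) * R) := by
  simp [ptrace2, trace, mul_apply, Fintype.sum_prod_type, Fin.sum_univ_two, kroneckerMap_apply,
    Matrix.single_apply, Matrix.one_apply]

theorem ptrace1_offdiag (R : Matrix (Fin 2 × Fin 2) (Fin 2 × Fin 2) ℂ) :
    ptrace1 R 0 1 =
      trace (((1 : Matrix (Fin 2) (Fin 2) ℂ) ⊗ₖ Matrix.single 1 0 (1 : ℂ)) * R) := by
  simp [ptrace1, trace, mul_apply, Fintype.sum_prod_type, Fin.sum_univ_two, kroneckerMap_apply,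
    Matrix.single_apply, Matrix.one_apply]

theorem isHermitian_dm (v : Fin 2 → ℂ) : (dm v).IsHermitian := by
  ext i j
  simp [dm, vecMulVec_apply, mul_comm]

theorem isHermitian_conj_kronecker (U : Matrix (Fin 2 × Fin 2) (Fin 2 × Fin 2) ℂ)
    (v w : Fin 2 → ℂ) : (U * (dm v ⊗ₖ dm w) * Uᴴ).IsHermitian := by
  refine isHermitian_mul_mul_conjTranspose U ?_
  rw [IsHermitian, conjTranspose_kronecker, isHermitian_dm v, isHermitian_dm w]

theorem isHermitian_ptrace2 (R : Matrix (Fin 2 × Fin 2) (Fin 2 × Fin 2) ℂ)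
    (hR : R.IsHermitian) : (ptrace2 R).IsHermitian := by
  ext i j
  simp only [conjTranspose_apply, ptrace2, star_sum, hR.apply]

theorem isHermitian_ptrace1 (R : Matrix (Fin 2 × Fin 2) (Fin 2 × Fin 2) ℂ)
    (hR : R.IsHermitian) : (ptrace1 R).IsHermitian := by
  ext i j
  simp only [conjTranspose_apply, ptrace1, star_sum, hR.apply]

theorem trace_conj_move (U E R : Matrix (Fin 2 × Fin 2) (Fin 2 × Fin 2) ℂ) :
    trace (E * (U * R * Uᴴ)) = trace (Uᴴ * E * U * R) := by
  rw [← mul_assoc, trace_mul_comm]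
  simp only [mul_assoc]

theorem conj_ne_zero (U E : Matrix (Fin 2 × Fin 2) (Fin 2 × Fin 2) ℂ) (hU : Uᴴ * U = 1)
    (hE : E ≠ 0) : Uᴴ * E * U ≠ 0 := by
  intro h
  have hU' : U * Uᴴ = 1 := mul_eq_one_comm.1 hU
  apply hE
  calc E = (U * Uᴴ) * E * (U * Uᴴ) := by rw [hU', one_mul, mul_one]
    _ = U * (Uᴴ * E * U) * Uᴴ := by simp only [mul_assoc]
    _ = 0 := by rw [h, mul_zero, zero_mul]

/-- Theorem 2: for every U ∈ SU(4), the set of parameters for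
which the PSF is undefined has Lebesgue measure zero. -/
theorem undefined_psf_measure_zero (U : Matrix (Fin 2 × Fin 2) (Fin 2 × Fin 2) ℂ)
    (hU : Uᴴ * U = 1) (hdet : U.det = 1) :
    MeasureTheory.volume {q : ℝ × ℝ × ℝ × ℝ |
      q.1 ∈ Set.Icc 0 π ∧ q.2.1 ∈ Set.Icc 0 (2 * π) ∧
      q.2.2.1 ∈ Set.Icc 0 π ∧ q.2.2.2 ∈ Set.Icc 0 (2 * π) ∧
      (mvec (ptrace2 (U * (dm (ψ q.1 q.2.1) ⊗ₖ dm (ψ q.2.2.1 q.2.2.2)) * Uᴴ)) = 0 ∨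
       mvec (ptrace1 (U * (dm (ψ q.1 q.2.1) ⊗ₖ dm (ψ q.2.2.1 q.2.2.2)) * Uᴴ)) = 0)}
      = 0 := by
  have hE2 :
      (Matrix.single 1 0 1 : Matrix (Fin 2) (Fin 2) ℂ) ⊗ₖ (1 : Matrix (Fin 2) (Fin 2) ℂ) ≠ 0 :=
    fun h => by
    simpa [kroneckerMap_apply] using congrFun (congrFun h (1, 0)) (0, 0)
  have hE1 : (1 : Matrix (Fin 2) (Fin 2) ℂ) ⊗ₖ
      (Matrix.single 1 0 1 : Matrix (Fin 2) (Fin 2) ℂ) ≠ 0 := fun h => by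
    simpa [kroneckerMap_apply] using congrFun (congrFun h (0, 1)) (0, 0)
  refine MeasureTheory.measure_mono_null ?_ (MeasureTheory.measure_union_null
    (volume_trace_eq_zero _ (conj_ne_zero U _ hU hE2))
    (volume_trace_eq_zero _ (conj_ne_zero U _ hU hE1)))
  rintro q ⟨-, -, -, -, h | h⟩
  · left
    have := offdiag_eq_zero_of_mvec _
      (isHermitian_ptrace2 _ (isHermitian_conj_kronecker U _ _)) h
    rwa [ptrace2_offdiag, trace_conj_move] at this
  · right
    have := offdiag_eq_zero_of_mvec _
      (isHermitian_ptrace1 _ (isHermitian_conj_kronecker U _ _)) h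
    rwa [ptrace1_offdiag, trace_conj_move] at this

end
end

section
/- Let ρ₁, ρ₂ be single-qubit density matrices with Bloch vectors n_i = r_i(cos φ_i, sin φ_i, 0) lying in the equatorial plane, with purities 0 ≤ r_i ≤ 1 (θ₁ = θ₂ = π/2). Let U_max = ((R_z(π/2) R_y(0)) ⊗ 1₂) U_c(3π/4, π/4, π/4) where U_c(α,β,γ) = C₂₁ (1₂ ⊗ R_y(β)) C₁₂ (R_z(γ) ⊗ R_y(α)) C₂₁. Then the reduced Bloch vectors of U_max (ρ₁⊗ρ₂) U_max† are n₁' = ½ (r₁cos φ₁ − r₂ sin φ₂, −r₁ sin φ₁ − r₂ cos φ₂, −r₁r₂ cos(φ₁−φ₂)) and n₂' = ½ (r₁cos φ₁ − r₂ sin φ₂, −r₁ sin φ₁ − r₂ cos φ₂, r₁r₂ cos(φ₁−φ₂)); in particular their projections into the xy-plane are identical. -/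
/-!
All the angles of the circuit are multiples of `π/8`, so multiplying out the gates gives `U_max` as an
explicit matrix with a single nonzero entry in its rows `|00⟩`, `|11⟩` and two in its rows `|01⟩`,
`|10⟩` (`Umax_eq`), whose entries are built from `exp(±iπ/8)` and `1/√2`. The real and imaginary parts
`c`, `s` of `exp(iπ/8)` enter only through the relations `c² + s² = 1`, `c² - s² = 2cs = h`, `h² = 1/2`.
Conjugating a product of two equatorial states by this matrix and taking partial traces gives
polynomials in the Cartesian Bloch components `x₁, y₁, x₂, y₂`, which reduce to the claimed vectors
modulo those relations (`bloch_UmaxMatrix`). In polar form `x₁ x₂ + y₁ y₂ = r₁ r₂ cos (φ₁ - φ₂)`.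
-/

open Matrix Complex Real Kronecker
open scoped ComplexOrder

noncomputable section

/-- With `c = cos (π/8)`, `s = sin (π/8)`, `h = √2/2`, these polynomial relations encode
that `c + s i` is a unit complex number with square `exp(iπ/4) = h (1 + i)`. -/
lemma trig_relations :
    Real.cos (π / 8) ^ 2 + Real.sin (π / 8) ^ 2 = 1 ∧
    Real.cos (π / 8) ^ 2 - Real.sin (π / 8) ^ 2 = √2 / 2 ∧
    2 * Real.sin (π / 8) * Real.cos (π / 8) = √2 / 2 ∧ (√2 / 2) ^ 2 = 1 / 2 := by
  refine ⟨Real.cos_sq_add_sin_sq _, ?_, ?_, ?_⟩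
  · rw [← Real.cos_two_mul', ← Real.cos_pi_div_four]; ring_nf
  · rw [← Real.sin_two_mul, ← Real.sin_pi_div_four]; ring_nf
  · rw [div_pow, Real.sq_sqrt (by norm_num)]; norm_num

lemma Rz_eq_cos_sin (γ : ℝ) :
    Rz γ = !![(Real.cos (γ / 2) : ℂ) - Real.sin (γ / 2) * I, 0;
              0, (Real.cos (γ / 2) : ℂ) + Real.sin (γ / 2) * I] := by
  have e₁ : -(I * (γ : ℂ) / 2) = ((-(γ / 2) : ℝ) : ℂ) * I := by push_cast; ring
  have e₂ : I * (γ : ℂ) / 2 = ((γ / 2 : ℝ) : ℂ) * I := by push_cast; ring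
  rw [Rz, e₁, e₂, Complex.exp_mul_I, Complex.exp_mul_I, ← Complex.ofReal_cos,
    ← Complex.ofReal_sin, ← Complex.ofReal_cos, ← Complex.ofReal_sin, Real.cos_neg, Real.sin_neg]
  push_cast
  rw [neg_mul, ← sub_eq_add_neg]

/-- The unitary `U_max` in closed form, as a block matrix indexed by the first qubit; `U_max`
itself has `c + s i = exp(iπ/8)` and `h = 1/√2`. -/
def UmaxMatrix (c s h : ℂ) : Matrix (Fin 2 × Fin 2) (Fin 2 × Fin 2) ℂ :=
  fun p q => (!![!![0, 0; 0, -(h * (c - s * I))], !![0, I * (c + s * I); h * (c - s * I), 0];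
                 !![0, I * h * (c - s * I); c + s * I, 0], !![I * h * (c - s * I), 0; 0, 0]]
                 : Matrix (Fin 2) (Fin 2) (Matrix (Fin 2) (Fin 2) ℂ)) p.1 q.1 p.2 q.2

lemma Umax_eq :
    ((Rz (π / 2) * Ry 0) ⊗ₖ (1 : Matrix (Fin 2) (Fin 2) ℂ)) * Uc (3 * π / 4) (π / 4) (π / 4) =
      UmaxMatrix (Real.cos (π / 8)) (Real.sin (π / 8)) (√2 / 2 : ℝ) := by
  obtain ⟨h1, h2, h3, h4⟩ := trig_relations
  have c3 : Real.cos (3 * π / 4 / 2) = Real.sin (π / 8) := by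
    rw [← Real.cos_pi_div_two_sub]; ring_nf
  have s3 : Real.sin (3 * π / 4 / 2) = Real.cos (π / 8) := by
    rw [← Real.sin_pi_div_two_sub]; ring_nf
  have e8 : π / 4 / 2 = π / 8 := by ring
  have e4 : π / 2 / 2 = π / 4 := by ring
  rw [Uc, Rz_eq_cos_sin, Rz_eq_cos_sin, Ry, Ry, Ry, c3, s3, e8, e4, Real.cos_pi_div_four,
    Real.sin_pi_div_four, zero_div, Real.cos_zero, Real.sin_zero]
  generalize √2 / 2 = h at *
  generalize Real.cos (π / 8) = c at *
  generalize Real.sin (π / 8) = s at *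
  have h1' : (c : ℂ) ^ 2 + s ^ 2 = 1 := mod_cast h1
  have h2' : (c : ℂ) ^ 2 - s ^ 2 = h := mod_cast h2
  have h3' : 2 * (s : ℂ) * c = h := mod_cast h3
  have h4' : (h : ℂ) * h = 1 / 2 := by
    rw [← sq, ← Complex.ofReal_pow, h4]; norm_num
  have hI := Complex.I_mul_I
  clear h1 h2 h3 h4 c3 s3 e4 e8
  ext ⟨i, j⟩ ⟨k, l⟩
  fin_cases i <;> fin_cases j <;> fin_cases k <;> fin_cases l <;>
    simp [UmaxMatrix, Matrix.mul_apply, Fintype.sum_prod_type, Fin.sum_univ_two, CNOT12, CNOT21,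
      Matrix.one_apply] <;>
    grind

lemma bloch_eq (τ : Matrix (Fin 2) (Fin 2) ℂ) :
    bloch τ = ![(τ 1 0).re + (τ 0 1).re, (τ 1 0).im - (τ 0 1).im, (τ 0 0).re - (τ 1 1).re] := by
  ext a
  fin_cases a <;>
    simp [bloch, Matrix.trace_fin_two, Matrix.vecMul, dotProduct, Fin.sum_univ_two, pauliX, pauliY, pauliZ,
      sub_eq_add_neg]

lemma equatorial_eq (x y : ℝ) :
    (2 : ℂ)⁻¹ • ((1 : Matrix (Fin 2) (Fin 2) ℂ) + (x : ℂ) • pauliX + (y : ℂ) • pauliY) =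
      !![((1 / 2 : ℝ) : ℂ), ((x / 2 : ℝ) : ℂ) - (y / 2 : ℝ) * I;
         ((x / 2 : ℝ) : ℂ) + (y / 2 : ℝ) * I, ((1 / 2 : ℝ) : ℂ)] := by
  ext i j
  fin_cases i <;> fin_cases j <;> simp [pauliX, pauliY] <;> ring

/-- Reduced Bloch vectors after conjugating a product of equatorial states by `UmaxMatrix c s h`;
the hypotheses say that `c + s i`
is a unit complex number with square `h (1 + i)` and that `h² = 1/2`. -/
lemma bloch_UmaxMatrix (x₁ y₁ x₂ y₂ c s h : ℝ) (hcs : c ^ 2 + s ^ 2 = 1)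
    (hc : c ^ 2 - s ^ 2 = h) (hs : 2 * s * c = h) (hh : h ^ 2 = 1 / 2)
    (ρ : Matrix (Fin 2 × Fin 2) (Fin 2 × Fin 2) ℂ)
    (hρ : ρ = UmaxMatrix c s h *
      (((2 : ℂ)⁻¹ • ((1 : Matrix (Fin 2) (Fin 2) ℂ) + (x₁ : ℂ) • pauliX + (y₁ : ℂ) • pauliY)) ⊗ₖ
        ((2 : ℂ)⁻¹ • ((1 : Matrix (Fin 2) (Fin 2) ℂ) + (x₂ : ℂ) • pauliX + (y₂ : ℂ) • pauliY))) *
      (UmaxMatrix c s h)ᴴ) :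
    bloch (ptrace2 ρ) = ![(x₁ - y₂) / 2, (-y₁ - x₂) / 2, -(x₁ * x₂ + y₁ * y₂) / 2] ∧
    bloch (ptrace1 ρ) = ![(x₁ - y₂) / 2, (-y₁ - x₂) / 2, (x₁ * x₂ + y₁ * y₂) / 2] := by
  rw [equatorial_eq, equatorial_eq] at hρ
  subst hρ
  rw [bloch_eq, bloch_eq]
  constructor <;> ext a <;> fin_cases a <;>
    simp [ptrace1, ptrace2, UmaxMatrix, Matrix.mul_apply, Fintype.sum_prod_type,
      Fin.sum_univ_two, -one_div] <;>
    grind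

/-- explicit reduced Bloch vectors after U_max for equatorial
initial states; in particular the xy-projections coincide. -/
theorem umax_equatorial_bloch (r₁ r₂ φ₁ φ₂ : ℝ)
    (h₁ : 0 ≤ r₁) (h₁' : r₁ ≤ 1) (h₂ : 0 ≤ r₂) (h₂' : r₂ ≤ 1) :
    ∀ ρ' : Matrix (Fin 2 × Fin 2) (Fin 2 × Fin 2) ℂ,
    ρ' = (((Rz (π / 2) * Ry 0) ⊗ₖ (1 : Matrix (Fin 2) (Fin 2) ℂ)) *
          Uc (3 * π / 4) (π / 4) (π / 4)) *
        (((2 : ℂ)⁻¹ • ((1 : Matrix (Fin 2) (Fin 2) ℂ) +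
            ((r₁ * Real.cos φ₁ : ℝ) : ℂ) • pauliX +
            ((r₁ * Real.sin φ₁ : ℝ) : ℂ) • pauliY)) ⊗ₖ
          ((2 : ℂ)⁻¹ • ((1 : Matrix (Fin 2) (Fin 2) ℂ) +
            ((r₂ * Real.cos φ₂ : ℝ) : ℂ) • pauliX +
            ((r₂ * Real.sin φ₂ : ℝ) : ℂ) • pauliY))) *
        ((((Rz (π / 2) * Ry 0) ⊗ₖ (1 : Matrix (Fin 2) (Fin 2) ℂ)) *
          Uc (3 * π / 4) (π / 4) (π / 4))ᴴ) →
    bloch (ptrace2 ρ') =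
      ![(r₁ * Real.cos φ₁ - r₂ * Real.sin φ₂) / 2,
        (-(r₁ * Real.sin φ₁) - r₂ * Real.cos φ₂) / 2,
        -(r₁ * r₂ * Real.cos (φ₁ - φ₂)) / 2] ∧
    bloch (ptrace1 ρ') =
      ![(r₁ * Real.cos φ₁ - r₂ * Real.sin φ₂) / 2,
        (-(r₁ * Real.sin φ₁) - r₂ * Real.cos φ₂) / 2,
        (r₁ * r₂ * Real.cos (φ₁ - φ₂)) / 2] ∧
    mvec (ptrace2 ρ') = mvec (ptrace1 ρ') := by
  intro ρ' hρ
  rw [Umax_eq] at hρ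
  obtain ⟨h1, h2, h3, h4⟩ := trig_relations
  obtain ⟨hb₂, hb₁⟩ := bloch_UmaxMatrix _ _ _ _ _ _ _ h1 h2 h3 h4 ρ' hρ
  have hcos : r₁ * r₂ * Real.cos (φ₁ - φ₂) =
      r₁ * Real.cos φ₁ * (r₂ * Real.cos φ₂) + r₁ * Real.sin φ₁ * (r₂ * Real.sin φ₂) := by
    rw [Real.cos_sub]; ring
  rw [hcos]
  refine ⟨hb₂, hb₁, ?_⟩
  -- `mvec` consists of the first two coordinates of `bloch`.
  change ![bloch (ptrace2 ρ') 0, bloch (ptrace2 ρ') 1] =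
    ![bloch (ptrace1 ρ') 0, bloch (ptrace1 ρ') 1]
  rw [hb₂, hb₁]
  rfl

end
end

section
/- Let ρ₁, ρ₂ be single-qubit density matrices with equatorial Bloch vectors n_i = r_i(cos φ_i, sin φ_i, 0), 0 < r_i ≤ 1, and let U_max = ((R_z(π/2)) ⊗ 1₂) U_c(3π/4, π/4, π/4) with U_c(α,β,γ) = C₂₁ (1₂ ⊗ R_y(β)) C₁₂ (R_z(γ) ⊗ R_y(α)) C₂₁. Then whenever the phase synchronization fidelity F(ρ₁⊗ρ₂, U_max) is defined (i.e. both final reduced Bloch vectors have nonzero projection into the xy-plane), it equals 1: U_max achieves perfect quantum-phase synchronization on the set of equatorial initial product states. -/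
/-!
Up to a scalar of modulus `√2 / 2`, the circuit `U_max` is a matrix `coreU` with entries in `ℤ[i]`:
it splits along the parity of the two bits, being an `R_y(π)` on the even sector and a Hadamard
matrix on the odd one, up to phases (`umax_eq`). Scalars act on `U ρ U†` through their squared
modulus only. In the Heisenberg picture `U_max` sends `σ_x ⊗ 1` and `1 ⊗ σ_x` to
`(σ_x ⊗ 1 - 1 ⊗ σ_y ± (σ_y ⊗ σ_z - σ_z ⊗ σ_x)) / 2`, and `σ_y ⊗ 1` and `1 ⊗ σ_y` to
`(-(1 ⊗ σ_x) - σ_y ⊗ 1 ± (σ_x ⊗ σ_z + σ_z ⊗ σ_y)) / 2`. The terms whose sign differs between the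
two qubits contain a `σ_z`, so their expectation vanishes on products of equatorial states. Hence
both final planar Bloch vectors equal `(x₁ - y₂, -(y₁ + x₂)) / 2` (`mvec_equatorial`), and the
cosine of the angle between a nonzero vector and itself is `1` (`phaseFid_eq_one`).
-/


open Matrix Complex Real Kronecker
open scoped ComplexOrder

noncomputable section

/-- The matrix proportional to `U_max`, written as a block matrix: the outer indices are those of the
first qubit, the inner ones those of the second. -/
def coreU : Matrix (Fin 2 × Fin 2) (Fin 2 × Fin 2) ℂ := fun p q =>
  (![![!![0, 0; 0, -1], !![0, I - 1; 1, 0]],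
     ![!![0, I; 1 + I, 0], !![I, 0; 0, 0]]] p.1 q.1) p.2 q.2

lemma cos_three_pi_div_eight : Real.cos (3 * π / 4 / 2) = Real.sin (π / 4 / 2) := by
  rw [← Real.cos_pi_div_two_sub]; ring_nf

lemma sin_three_pi_div_eight : Real.sin (3 * π / 4 / 2) = Real.cos (π / 4 / 2) := by
  rw [← Real.sin_pi_div_two_sub]; ring_nf

/-- Conjugation by a multiple of `U` only sees the squared modulus of the scalar. -/
lemma smul_conj_smul (c : ℂ) (U ρ : Matrix (Fin 2 × Fin 2) (Fin 2 × Fin 2) ℂ) :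
    (c • U) * ρ * (c • U)ᴴ = (star c * c) • (U * ρ * Uᴴ) := by
  simp [Matrix.conjTranspose_smul, smul_smul]

lemma phaseFid_eq_one {τ₁ τ₂ : Matrix (Fin 2) (Fin 2) ℂ} (h : mvec τ₁ = mvec τ₂)
    (h0 : mvec τ₁ ≠ 0) : phaseFid τ₁ τ₂ = 1 := by
  unfold phaseFid
  rw [← h]
  have hpos : 0 < mvec τ₁ 0 ^ 2 + mvec τ₁ 1 ^ 2 := by
    by_contra hn
    refine h0 (funext fun i => ?_)
    fin_cases i
    · simp only [Fin.zero_eta, Pi.zero_apply]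
      nlinarith [sq_nonneg (mvec τ₁ 0), sq_nonneg (mvec τ₁ 1)]
    · simp only [Fin.mk_one, Pi.zero_apply]
      nlinarith [sq_nonneg (mvec τ₁ 0), sq_nonneg (mvec τ₁ 1)]
  unfold mnorm mdot
  rw [Real.mul_self_sqrt hpos.le, ← sq, ← sq, div_self hpos.ne']

lemma umax_eq : (Rz (π / 2) ⊗ₖ (1 : Matrix (Fin 2) (Fin 2) ℂ)) *
    Uc (3 * π / 4) (π / 4) (π / 4) =
    (cexp (-(I * (π / 8))) * (√2 / 2)) • coreU := by
  -- `h1` collapses the even sector to `R_y(π)`; `h2` and `h3` turn the odd one into a Hadamard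
  -- matrix.
  have h1 : ((Real.cos (π / 4 / 2) : ℝ) : ℂ) ^ 2 + ((Real.sin (π / 4 / 2) : ℝ) : ℂ) ^ 2 = 1 := by
    exact_mod_cast Real.cos_sq_add_sin_sq _
  have h2 : ((Real.cos (π / 4 / 2) : ℝ) : ℂ) ^ 2 - ((Real.sin (π / 4 / 2) : ℝ) : ℂ) ^ 2
      = (√2 : ℝ) / 2 := by
    have := Real.cos_two_mul' (π / 4 / 2)
    rw [show 2 * (π / 4 / 2) = π / 4 by ring, Real.cos_pi_div_four] at this
    exact_mod_cast this.symm
  have h3 : 2 * ((Real.sin (π / 4 / 2) : ℝ) : ℂ) * ((Real.cos (π / 4 / 2) : ℝ) : ℂ)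
      = (√2 : ℝ) / 2 := by
    have := Real.sin_two_mul (π / 4 / 2)
    rw [show 2 * (π / 4 / 2) = π / 4 by ring, Real.sin_pi_div_four] at this
    exact_mod_cast this.symm
  have hq : cexp (I * (π / 8)) ^ 2 = (√2 : ℝ) / 2 * (1 + I) := by
    rw [← Complex.exp_nat_mul,
      show ((2 : ℕ) : ℂ) * (I * (π / 8)) = ((π / 4 : ℝ) : ℂ) * I by push_cast; ring,
      Complex.exp_mul_I, ← Complex.ofReal_cos, ← Complex.ofReal_sin,
      Real.cos_pi_div_four, Real.sin_pi_div_four]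
    push_cast; ring
  have hr : cexp (-(I * (π / 8))) ^ 2 = (√2 : ℝ) / 2 * (1 - I) := by
    rw [← Complex.exp_nat_mul,
      show ((2 : ℕ) : ℂ) * (-(I * (π / 8))) = ((-(π / 4) : ℝ) : ℂ) * I by push_cast; ring,
      Complex.exp_mul_I, ← Complex.ofReal_cos, ← Complex.ofReal_sin, Real.cos_neg, Real.sin_neg,
      Real.cos_pi_div_four, Real.sin_pi_div_four]
    push_cast; ring
  have he : cexp (I * (π / 8)) * cexp (-(I * (π / 8))) = 1 := by
    rw [← Complex.exp_add]; simp
  have hz1 : Rz (π / 4) = !![cexp (-(I * (π / 8))), 0; 0, cexp (I * (π / 8))] := by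
    unfold Rz
    rw [show I * ((π / 4 : ℝ) : ℂ) / 2 = I * (π / 8) by push_cast; ring]
  have hz2 : Rz (π / 2) = !![cexp (-(I * (π / 8))) ^ 2, 0; 0, cexp (I * (π / 8)) ^ 2] := by
    unfold Rz
    rw [← Complex.exp_nat_mul, ← Complex.exp_nat_mul]
    congr 5 <;> push_cast <;> ring_nf
  have hI : I ^ 2 = -1 := I_sq
  have hs2 : ((√2 : ℝ) : ℂ) ^ 2 = 2 := by exact_mod_cast Real.sq_sqrt (by norm_num : (0:ℝ) ≤ 2)
  rw [Uc, hz1, hz2, Ry, Ry, cos_three_pi_div_eight, sin_three_pi_div_eight]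
  generalize ((Real.cos (π / 4 / 2) : ℝ) : ℂ) = c at *
  generalize ((Real.sin (π / 4 / 2) : ℝ) : ℂ) = s at *
  generalize cexp (I * (π / 8)) = e at *
  generalize cexp (-(I * (π / 8))) = w at *
  generalize ((√2 : ℝ) : ℂ) = t at *
  have he4 : e ^ 4 = I := by
    linear_combination (e ^ 2 + t / 2 * (1 + I)) * hq + t ^ 2 / 4 * hI + I / 2 * hs2
  have he3 : e ^ 3 = w * I := by linear_combination -e ^ 3 * he + w * he4
  ext ⟨i, j⟩ ⟨k, l⟩
  fin_cases i <;> fin_cases j <;> fin_cases k <;> fin_cases l <;>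
    simp [Matrix.mul_apply, Fintype.sum_prod_type, CNOT12, CNOT21, coreU, Matrix.one_apply]
  · right; ring
  · linear_combination -w ^ 3 * h1 - w * hr
  · linear_combination -w ^ 2 * e * h2 - w * (t / 2) * he
  · linear_combination w ^ 2 * e * h3 + w * (t / 2) * he
  · linear_combination e ^ 3 * h3 + t / 2 * he3
  · linear_combination e ^ 3 * h2 + t / 2 * he3
  · linear_combination e ^ 2 * w * h1 + w * hq
  · right; ring

/-- On a product of equatorial states the two reduced states have the same off-diagonal entries after
`coreU`, hence the same planar Bloch vector. -/
lemma mvec_equatorial (x₁ y₁ x₂ y₂ : ℝ) :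
    let ρ := ((2 : ℂ)⁻¹ • ((1 : Matrix (Fin 2) (Fin 2) ℂ) + (x₁ : ℂ) • pauliX +
          (y₁ : ℂ) • pauliY)) ⊗ₖ
        ((2 : ℂ)⁻¹ • ((1 : Matrix (Fin 2) (Fin 2) ℂ) + (x₂ : ℂ) • pauliX + (y₂ : ℂ) • pauliY))
    mvec (ptrace2 ((2⁻¹ : ℂ) • (coreU * ρ * coreUᴴ))) =
      mvec (ptrace1 ((2⁻¹ : ℂ) • (coreU * ρ * coreUᴴ))) := by
  intro ρ
  have key : ∀ τ σ : Matrix (Fin 2) (Fin 2) ℂ, τ 0 1 = σ 0 1 → τ 1 0 = σ 1 0 →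
      mvec τ = mvec σ := by
    intro τ σ h01 h10
    simp only [mvec, pauliX, pauliY, Matrix.trace_fin_two, Matrix.mul_apply, Fin.sum_univ_two]
    simp [h01, h10]
  apply key <;>
  · simp [ptrace1, ptrace2, ρ, coreU, Matrix.mul_apply, Fintype.sum_prod_type, pauliX, pauliY,
      Matrix.one_apply]
    ring_nf
    try simp only [I_sq, I_pow_three]
    try ring_nf

/-- U_max achieves perfect quantum-phase synchronization on
equatorial initial product states, whenever the PSF is defined. -/
theorem umax_perfect_qps_equatorial (r₁ r₂ φ₁ φ₂ : ℝ)
    (h₁ : 0 < r₁) (h₁' : r₁ ≤ 1) (h₂ : 0 < r₂) (h₂' : r₂ ≤ 1) :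
    ∀ ρ : Matrix (Fin 2 × Fin 2) (Fin 2 × Fin 2) ℂ,
    ρ = ((2 : ℂ)⁻¹ • ((1 : Matrix (Fin 2) (Fin 2) ℂ) +
          ((r₁ * Real.cos φ₁ : ℝ) : ℂ) • pauliX +
          ((r₁ * Real.sin φ₁ : ℝ) : ℂ) • pauliY)) ⊗ₖ
        ((2 : ℂ)⁻¹ • ((1 : Matrix (Fin 2) (Fin 2) ℂ) +
          ((r₂ * Real.cos φ₂ : ℝ) : ℂ) • pauliX +
          ((r₂ * Real.sin φ₂ : ℝ) : ℂ) • pauliY)) →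
    ∀ Umax : Matrix (Fin 2 × Fin 2) (Fin 2 × Fin 2) ℂ,
    Umax = (Rz (π / 2) ⊗ₖ (1 : Matrix (Fin 2) (Fin 2) ℂ)) *
        Uc (3 * π / 4) (π / 4) (π / 4) →
    mvec (ptrace2 (Umax * ρ * Umaxᴴ)) ≠ 0 →
    mvec (ptrace1 (Umax * ρ * Umaxᴴ)) ≠ 0 →
    PSF ρ Umax = 1 := by
  rintro ρ rfl Umax rfl h _
  rw [umax_eq] at h ⊢
  set c := cexp (-(I * (π / 8))) * (√2 / 2) with hc
  -- The phase drops out, and `(√2 / 2) ^ 2 = 1 / 2`.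
  have hcc : star c * c = 2⁻¹ := by
    have h2 : ((√2 : ℝ) : ℂ) ^ 2 = 2 := by exact_mod_cast Real.sq_sqrt (by norm_num : (0:ℝ) ≤ 2)
    have he : cexp (I * (π / 8)) * cexp (-(I * (π / 8))) = 1 := by
      rw [← Complex.exp_add]; simp
    have hs : star c = cexp (I * (π / 8)) * (√2 / 2) := by
      simp [hc, ← Complex.exp_conj, Complex.conj_ofNat]
    rw [hs, hc]
    linear_combination (√2 / 2 : ℂ) ^ 2 * he + h2 / 4
  unfold PSF
  rw [smul_conj_smul, hcc] at h ⊢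
  refine phaseFid_eq_one ?_ h
  apply mvec_equatorial

end
end
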